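/- arXiv:2407.04371 — 7 statements merged into one kernel-verified Lean document; each statement's English description precedes it below -/
import Mathlib

section
/- Let N ≥ 1 and let U ∈ M_{2N}(ℂ) be unitary. Then there exists a real weight matrix w ∈ ℝ^{N×N} such that for every real vector x ∈ ℝ^N (regarded as an element of ℂ^N), the QNN output satisfies f_U(x) = ∑_{i,j} w_{ij} x_i x_j. -/
open Matrix

/-!
The observable `Uᴴ Z U` is Hermitian because `Z` is, and padding by zeros only sees its top left
block `A`. The form `x† A x` of a Hermitian `A` is real; at a real vector `x`, its real part depends
only on the entrywise real part of `A`, which is the weight matrix.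
-/

variable {𝕜 m n ι : Type*}

section QuadraticForms

variable [Fintype m] [Fintype n]

lemma dotProduct_mulVec_eq_sum {R : Type*} [NonUnitalCommSemiring R] (A : Matrix m n R)
    (v : m → R) (w : n → R) :
    v ⬝ᵥ A *ᵥ w = ∑ i, ∑ j, A i j * v i * w j := by
  simp only [dotProduct, mulVec, Finset.mul_sum]
  exact Finset.sum_congr rfl fun i _ ↦ Finset.sum_congr rfl fun j _ ↦ by
    rw [mul_left_comm, mul_assoc]

lemma star_sumElim_zero_dotProduct_mulVec {R : Type*} [NonUnitalNonAssocSemiring R]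
    [StarAddMonoid R] (M : Matrix (n ⊕ m) (n ⊕ m) R) (v : n → R) :
    star (Sum.elim v 0) ⬝ᵥ M *ᵥ Sum.elim v 0 = star v ⬝ᵥ M.toBlocks₁₁ *ᵥ v := by
  conv_lhs => rw [← fromBlocks_toBlocks M]
  simp [fromBlocks_mulVec, Function.star_sumElim]

variable [RCLike 𝕜]

lemma re_star_ofReal_dotProduct_mulVec_ofReal (A : Matrix m n 𝕜) (x : m → ℝ) (y : n → ℝ) :
    RCLike.re (star (fun i ↦ (x i : 𝕜)) ⬝ᵥ A *ᵥ fun j ↦ (y j : 𝕜)) =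
      x ⬝ᵥ A.map RCLike.re *ᵥ y := by
  simp [dotProduct, mulVec]

lemma star_ofReal_dotProduct_mulVec_ofReal_of_isHermitian {A : Matrix n n 𝕜}
    (hA : A.IsHermitian) (x : n → ℝ) :
    star (fun i ↦ (x i : 𝕜)) ⬝ᵥ A *ᵥ (fun i ↦ (x i : 𝕜)) =
      ((x ⬝ᵥ A.map RCLike.re *ᵥ x : ℝ) : 𝕜) := by
  rw [← re_star_ofReal_dotProduct_mulVec_ofReal]
  exact (RCLike.conj_eq_iff_re.mp
    (RCLike.conj_eq_iff_im.mpr (hA.im_star_dotProduct_mulVec_self _))).symm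

end QuadraticForms

lemma isHermitian_fromBlocks_one_neg_one {R : Type*} [Ring R] [StarRing R] [DecidableEq m]
    [DecidableEq n] : (fromBlocks 1 0 0 (-1) : Matrix (m ⊕ n) (m ⊕ n) R).IsHermitian :=
  isHermitian_one.fromBlocks conjTranspose_zero isHermitian_one.neg

theorem stmt1_general [RCLike 𝕜] [Fintype m] [Fintype n] [Fintype ι] {Z : Matrix ι ι 𝕜}
    (hZ : Z.IsHermitian) (U : Matrix ι (n ⊕ m) 𝕜) :
    ∃ w : n → n → ℝ, ∀ x : n → ℝ,
      star (Sum.elim (fun i ↦ (x i : 𝕜)) 0) ⬝ᵥ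
          ((Uᴴ * Z * U) *ᵥ Sum.elim (fun i ↦ (x i : 𝕜)) 0) =
        ((∑ i, ∑ j, w i j * x i * x j : ℝ) : 𝕜) := by
  have hA : (Uᴴ * Z * U).toBlocks₁₁.IsHermitian :=
    (isHermitian_conjTranspose_mul_mul U hZ).submatrix Sum.inl
  refine ⟨(Uᴴ * Z * U).toBlocks₁₁.map RCLike.re, fun x ↦ ?_⟩
  rw [star_sumElim_zero_dotProduct_mulVec,
    star_ofReal_dotProduct_mulVec_ofReal_of_isHermitian hA, dotProduct_mulVec_eq_sum]

/-- For every unitary `U ∈ M_{2N}(ℂ)` there is a real weight matrix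
`w ∈ ℝ^{N×N}` such that for every real vector `x ∈ ℝ^N` (viewed in `ℂ^N`), the QNN
output `f_U(x) = v† U† Z U v` (with `v = (x,0)`, `Z = diag(I,-I)`) equals
`∑_{i,j} w_{ij} x_i x_j`. -/
theorem stmt1 (N : ℕ) (hN : 1 ≤ N)
    (U : Matrix (Fin N ⊕ Fin N) (Fin N ⊕ Fin N) ℂ)
    (hU : U ∈ Matrix.unitaryGroup (Fin N ⊕ Fin N) ℂ) :
    ∃ w : Fin N → Fin N → ℝ,
      ∀ x : Fin N → ℝ,
        star (Sum.elim (fun i => (x i : ℂ)) 0) ⬝ᵥ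
          ((Uᴴ * Matrix.fromBlocks 1 0 0 (-1) * U) *ᵥ Sum.elim (fun i => (x i : ℂ)) 0)
        = ((∑ i, ∑ j, w i j * x i * x j : ℝ) : ℂ) :=
  stmt1_general isHermitian_fromBlocks_one_neg_one U
end

section
/- For every N ≥ 1 and all x, y ∈ ℂ^N, ∑_{i,j} (x⊛x)_{ij} (y⊛y)_{ij} = |∑_i x_i conj(y_i)|². That is, the kernel of the tensor product perceptron equals the QNN kernel K(x, y) = |⟨x, y⟩|². -/
open Matrix

/-- The complex tensor product `x ⊛ x ∈ ℝ^{N×N}`: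
`(x⊛x)_{ii} = |x_i|²` and, for `i ≠ j`, `(x⊛x)_{ij} = Re(x_i conj(x_j)) + Im(x_i conj(x_j))`. -/
def cprod {N : ℕ} (x : Fin N → ℂ) : Fin N → Fin N → ℝ := fun i j =>
  if i = j then Complex.normSq (x i)
  else (x i * star (x j)).re + (x i * star (x j)).im

/- With `L z = Re z + Im z`, the tensor product `x ⊛ x` is `L` applied entrywise to the Hermitian
matrix `x xᴴ`. Since `L z * L w = Re (z * conj w) + Im (z * w)`, the entrywise pairing of `L A` and
`L B` is `Re tr (A Bᴴ) + Im tr (A Bᵀ)`. For Hermitian `A` and `B` the second trace is real, so `L`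
preserves the Frobenius inner product; on `x xᴴ` and `y yᴴ` that inner product is `|⟨x, y⟩|²`. -/

section RankOne

variable {R n : Type*}

theorem isHermitian_vecMulVec_self_star [Mul R] [StarMul R] (x : n → R) :
    (vecMulVec x (star x)).IsHermitian := by
  rw [IsHermitian, conjTranspose_vecMulVec, star_star]

theorem trace_vecMulVec_star_mul_vecMulVec_star [CommSemiring R] [StarRing R] [Fintype n]
    (x y : n → R) :
    (vecMulVec x (star x) * vecMulVec y (star y)).trace =
      x ⬝ᵥ star y * star (x ⬝ᵥ star y) := by
  rw [vecMulVec_mul_vecMulVec, trace_vecMulVec, dotProduct_smul, smul_eq_mul, mul_comm,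
    star_dotProduct, dotProduct_comm (star y)]

end RankOne

section ReAddIm

variable {𝕜 m n : Type*} [RCLike 𝕜]

/-- The entrywise image of a matrix under `z ↦ Re z + Im z`. It encodes a Hermitian matrix, such as
`x xᴴ`, by a real matrix of the same size; for `𝕜 = ℝ` it is the identity. -/
def reAddIm (A : Matrix m n 𝕜) : Matrix m n ℝ :=
  A.map fun z => RCLike.re z + RCLike.im z

theorem re_add_im_mul_re_add_im (z w : 𝕜) :
    (RCLike.re z + RCLike.im z) * (RCLike.re w + RCLike.im w) =
      RCLike.re (z * star w) + RCLike.im (z * w) := by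
  simp only [RCLike.star_def, RCLike.mul_re, RCLike.mul_im, RCLike.conj_re, RCLike.conj_im]
  ring

theorem sum_reAddIm_mul_reAddIm [Fintype m] [Fintype n] (A B : Matrix m n 𝕜) :
    ∑ i, ∑ j, reAddIm A i j * reAddIm B i j =
      RCLike.re (A * Bᴴ).trace + RCLike.im (A * Bᵀ).trace := by
  simp only [reAddIm, map_apply, re_add_im_mul_re_add_im, Finset.sum_add_distrib, trace, diag_apply,
    mul_apply, conjTranspose_apply, transpose_apply, map_sum]

theorem im_trace_mul_transpose_of_isHermitian [Fintype n] {A B : Matrix n n 𝕜}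
    (hA : A.IsHermitian) (hB : B.IsHermitian) : RCLike.im (A * Bᵀ).trace = 0 := by
  have star_trace : star (A * Bᵀ).trace = (A * Bᵀ).trace := by
    rw [← trace_conjTranspose, conjTranspose_mul, hA.eq, hB.transpose.eq, trace_mul_comm]
  exact RCLike.conj_eq_iff_im.mp star_trace

theorem sum_reAddIm_mul_reAddIm_of_isHermitian [Fintype n] {A B : Matrix n n 𝕜}
    (hA : A.IsHermitian) (hB : B.IsHermitian) :
    ∑ i, ∑ j, reAddIm A i j * reAddIm B i j = RCLike.re (A * B).trace := by
  rw [sum_reAddIm_mul_reAddIm, im_trace_mul_transpose_of_isHermitian hA hB, add_zero, hB.eq]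

theorem stmt5_general [Fintype n] (x y : n → 𝕜) :
    ∑ i, ∑ j, reAddIm (vecMulVec x (star x)) i j * reAddIm (vecMulVec y (star y)) i j =
      RCLike.normSq (x ⬝ᵥ star y) := by
  rw [sum_reAddIm_mul_reAddIm_of_isHermitian (isHermitian_vecMulVec_self_star x)
      (isHermitian_vecMulVec_self_star y),
    trace_vecMulVec_star_mul_vecMulVec_star, RCLike.star_def, RCLike.mul_conj, ← RCLike.ofReal_pow,
    RCLike.ofReal_re, RCLike.normSq_eq_def']

end ReAddIm

theorem cprod_eq_reAddIm {N : ℕ} (x : Fin N → ℂ) :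
    cprod x = reAddIm (vecMulVec x (star x)) := by
  ext i j
  obtain rfl | hij := eq_or_ne i j
  · simp [cprod, reAddIm, vecMulVec_apply, Complex.normSq_apply, mul_comm]
  · simp [cprod, reAddIm, vecMulVec_apply, hij]

/-- For all `x, y ∈ ℂ^N`,
`∑_{i,j} (x⊛x)_{ij} (y⊛y)_{ij} = |∑_i x_i conj(y_i)|²`:
the kernel of the tensor product perceptron equals the QNN kernel `K(x,y) = |⟨x,y⟩|²`. -/
theorem stmt5 (N : ℕ) (hN : 1 ≤ N) (x y : Fin N → ℂ) :
    (∑ i, ∑ j, cprod x i j * cprod y i j)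
      = Complex.normSq (∑ i, x i * star (y i)) := by
  simpa only [cprod_eq_reAddIm, dotProduct, Pi.star_apply, RCLike.normSq_to_complex]
    using stmt5_general x y
end

section
/- Let n ≥ 3. There exist no w ∈ ℝ^{n×n} and z ∈ ℝ such that for every nonzero x ∈ {0,1}^n, writing x̂ = x / ‖x‖₂, one has ∑_{i,j} w_{ij} x̂_i x̂_j − z ≥ 0 whenever parity(x) = 1 and ∑_{i,j} w_{ij} x̂_i x̂_j − z < 0 whenever parity(x) = 0. That is, a tensor product perceptron (even with bias) cannot express the parity function on the normalised Boolean hypercube {0,1}^n for n ≥ 3. -/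
/-!
On a normalised input `x̂ = x / ‖x‖` the bias is homogeneous of degree two in disguise:
`‖x‖² (∑ w i j x̂ i x̂ j - z) = ∑ (w - z I) i j x i x j`. A perceptron computing parity would thus
give a quadratic form `Q` with `Q a, Q b, Q c, Q (a + b + c) ≥ 0` and
`Q (a + b), Q (b + c), Q (c + a) < 0` for three basis vectors, contradicting the vanishing of the
third difference: `Q (a + b + c) + Q a + Q b + Q c = Q (a + b) + Q (b + c) + Q (c + a)`.
-/

open Finset

section QuadraticMap

variable {R M N : Type*} [CommRing R] [AddCommGroup M] [Module R M]
  [AddCommGroup N] [LinearOrder N] [IsOrderedAddMonoid N] [Module R N]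

theorem quadraticMap_add_nonneg_or (Q : QuadraticMap R M N) {x y z : M} (hx : 0 ≤ Q x)
    (hy : 0 ≤ Q y) (hz : 0 ≤ Q z) (hxyz : 0 ≤ Q (x + y + z)) :
    0 ≤ Q (x + y) ∨ 0 ≤ Q (y + z) ∨ 0 ≤ Q (z + x) := by
  by_contra! ⟨hxy, hyz, hzx⟩
  have pairs_neg : Q (x + y) + Q (y + z) + Q (z + x) < 0 :=
    add_neg (add_neg hxy hyz) hzx
  rw [← Q.map_add_add_add_map] at pairs_neg
  exact pairs_neg.not_ge (add_nonneg hxyz (add_nonneg (add_nonneg hx hy) hz))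

theorem not_forall_quadraticMap_sum_nonneg_iff_odd_card {ι : Type*} (Q : QuadraticMap R M N)
    (v : ι → M) {T : Finset ι} (hT : 3 ≤ #T) :
    ¬ ∀ S ⊆ T, S.Nonempty → (0 ≤ Q (∑ i ∈ S, v i) ↔ Odd #S) := by
  classical
  intro h
  obtain ⟨a, b, c, ha, hb, hc, hab, hac, hbc⟩ := two_lt_card_iff.mp hT
  have single_nonneg {i : ι} (hi : i ∈ T) : 0 ≤ Q (v i) := by
    simpa using h {i} (by simpa using hi) (singleton_nonempty i)
  have pair_neg {i j : ι} (hi : i ∈ T) (hj : j ∈ T) (hij : i ≠ j) : ¬ 0 ≤ Q (v i + v j) := by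
    rw [← sum_pair hij, h {i, j} (by simp [insert_subset_iff, hi, hj]) (insert_nonempty i {j}),
      card_pair hij]
    decide
  have triple_nonneg : 0 ≤ Q (v a + v b + v c) := by
    have hcard : #{a, b, c} = 3 := card_eq_three.mpr ⟨a, b, c, hab, hac, hbc, rfl⟩
    have hsum : ∑ i ∈ {a, b, c}, v i = v a + v b + v c := by
      rw [sum_insert (by simp [hab, hac]), sum_pair hbc, add_assoc]
    rw [← hsum, h {a, b, c} (by simp [insert_subset_iff, ha, hb, hc]) (insert_nonempty _ _), hcard]
    decide
  rcases quadraticMap_add_nonneg_or Q (single_nonneg ha) (single_nonneg hb) (single_nonneg hc)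
    triple_nonneg with hpair | hpair | hpair
  · exact pair_neg ha hb hab hpair
  · exact pair_neg hb hc hbc hpair
  · exact pair_neg hc ha hac.symm hpair

end QuadraticMap

section BiasedForm

variable {ι : Type*} [Fintype ι] [DecidableEq ι]

/-- The quadratic form of the matrix `w - z I`, which absorbs the bias `z` of the tensor product
perceptron with weights `w`: the two agree on unit vectors. -/
def biasedForm {R : Type*} [CommRing R] (w : Matrix ι ι R) (z : R) : QuadraticForm R (ι → R) :=
  (w - z • 1).toQuadraticForm'

theorem biasedForm_apply {R : Type*} [CommRing R] (w : Matrix ι ι R) (z : R) (x : ι → R) :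
    biasedForm w z x = (∑ i, ∑ j, w i j * x i * x j) - z * ∑ i, x i ^ 2 := by
  have hw : x ⬝ᵥ w.mulVec x = ∑ i, ∑ j, w i j * x i * x j := by
    simp only [dotProduct, Matrix.mulVec, mul_sum]
    exact sum_congr rfl fun i _ => sum_congr rfl fun j _ => by ring
  have hx : x ⬝ᵥ x = ∑ i, x i ^ 2 := by simp only [dotProduct, sq]
  calc biasedForm w z x = x ⬝ᵥ (w - z • 1).mulVec x := Matrix.toLinearMap₂'_apply' _ x x
    _ = x ⬝ᵥ w.mulVec x - z * (x ⬝ᵥ x) := by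
      rw [Matrix.sub_mulVec, Matrix.smul_mulVec, Matrix.one_mulVec, dotProduct_sub,
        dotProduct_smul, smul_eq_mul]
    _ = _ := by rw [hw, hx]

theorem sum_mul_normalize_sub_nonneg_iff (w : Matrix ι ι ℝ) (z : ℝ) {x : ι → ℝ} (hx : x ≠ 0) :
    0 ≤ (∑ i, ∑ j, w i j * (x i / √(∑ k, x k ^ 2)) * (x j / √(∑ k, x k ^ 2))) - z ↔
      0 ≤ biasedForm w z x := by
  set r := √(∑ k, x k ^ 2) with r_def
  have sum_sq_pos : 0 < ∑ k, x k ^ 2 := by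
    obtain ⟨i, hi⟩ := Function.ne_iff.mp hx
    exact sum_pos' (fun k _ => sq_nonneg (x k)) ⟨i, mem_univ i, sq_pos_of_ne_zero hi⟩
  have r_pos : 0 < r := Real.sqrt_pos.mpr sum_sq_pos
  have unit : ∑ k, (x k / r) ^ 2 = 1 := by
    simp only [div_pow, ← sum_div, r_def, Real.sq_sqrt sum_sq_pos.le, div_self sum_sq_pos.ne']
  have scale : (fun i => x i / r) = r⁻¹ • x := by
    ext i
    exact div_eq_inv_mul (x i) r
  have output_eq : (∑ i, ∑ j, w i j * (x i / r) * (x j / r)) - z =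
      r⁻¹ * r⁻¹ * biasedForm w z x := by
    rw [← smul_eq_mul (r⁻¹ * r⁻¹), ← QuadraticMap.map_smul, ← scale, biasedForm_apply, unit,
      mul_one]
  rw [output_eq, mul_nonneg_iff_of_pos_left (mul_pos (inv_pos.mpr r_pos) (inv_pos.mpr r_pos))]

end BiasedForm

theorem sum_single_one_eq_ite_decide {ι R : Type*} [DecidableEq ι] [NonAssocSemiring R]
    (S : Finset ι) :
    (∑ i ∈ S, Pi.single i (1 : R)) = fun i => if decide (i ∈ S) then 1 else 0 := by
  ext i
  simp [Finset.sum_apply, sum_pi_single]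

theorem stmt7_general {ι : Type*} [Fintype ι] {T : Finset ι} (hT : 3 ≤ #T) :
    ¬ ∃ (w : ι → ι → ℝ) (z : ℝ),
      ∀ x : ι → Bool, x ≠ (fun _ => false) → (∀ i, x i → i ∈ T) →
        let xr : ι → ℝ := fun i => if x i then 1 else 0
        let xhat : ι → ℝ := fun i => xr i / √(∑ j, xr j ^ 2)
        (Odd #{i | x i = true} → 0 ≤ (∑ i, ∑ j, w i j * xhat i * xhat j) - z) ∧
        (¬ Odd #{i | x i = true} → (∑ i, ∑ j, w i j * xhat i * xhat j) - z < 0) := by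
  classical
  rintro ⟨w, z, h⟩
  refine not_forall_quadraticMap_sum_nonneg_iff_odd_card (biasedForm w z)
    (fun i => Pi.single i 1) hT fun S hST ⟨a, ha⟩ => ?_
  have x_ne : (fun i => decide (i ∈ S)) ≠ fun _ => false :=
    Function.ne_iff.mpr ⟨a, by simp [ha]⟩
  have xr_ne : (fun i => if decide (i ∈ S) then (1 : ℝ) else 0) ≠ 0 :=
    Function.ne_iff.mpr ⟨a, by simp [ha]⟩
  have support_eq : ({i | decide (i ∈ S) = true} : Finset ι) = S := by simp
  obtain ⟨odd_imp, even_imp⟩ := h _ x_ne fun i hi => hST (of_decide_eq_true hi)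
  rw [support_eq] at odd_imp even_imp
  rw [sum_single_one_eq_ite_decide, ← sum_mul_normalize_sub_nonneg_iff w z xr_ne]
  exact ⟨fun hnonneg => by_contra fun heven => (even_imp heven).not_ge hnonneg, odd_imp⟩

/-- For `n ≥ 3`, no tensor product perceptron (even with a bias `z`) expresses
the parity function on the normalised Boolean hypercube `{0,1}^n ∖ {0}`: there are no
`w ∈ ℝ^{n×n}` and `z ∈ ℝ` such that for every nonzero `x ∈ {0,1}^n`, with `x̂ = x/‖x‖₂`,
`∑_{i,j} w_{ij} x̂_i x̂_j − z ≥ 0` when `parity(x) = 1` and `< 0` when `parity(x) = 0`. -/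
theorem stmt7 (n : ℕ) (hn : 3 ≤ n) :
    ¬ ∃ (w : Fin n → Fin n → ℝ) (z : ℝ),
      ∀ x : Fin n → Bool, x ≠ (fun _ => false) →
        let xr : Fin n → ℝ := fun i => if x i then 1 else 0
        let xhat : Fin n → ℝ := fun i => xr i / Real.sqrt (∑ j, xr j ^ 2)
        (Odd (Finset.univ.filter (fun i => x i = true)).card →
          0 ≤ (∑ i, ∑ j, w i j * xhat i * xhat j) - z) ∧
        (¬ Odd (Finset.univ.filter (fun i => x i = true)).card →
          (∑ i, ∑ j, w i j * xhat i * xhat j) - z < 0) := by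
  rintro ⟨w, z, h⟩
  exact stmt7_general (T := univ) (by simpa using hn) ⟨w, z, fun x hx _ => h x hx⟩
end

section
/- Let n ≥ 3. There exist no w ∈ ℝ^{n×n} and z ∈ ℝ such that for every x ∈ {0,1}^n (including the origin), one has ∑_{i,j} w_{ij} x_i x_j − z ≥ 0 whenever parity(x) = 1 and ∑_{i,j} w_{ij} x_i x_j − z < 0 whenever parity(x) = 0. That is, a tensor product perceptron (even with bias) cannot express the parity function on the unnormalised Boolean hypercube {0,1}^n for n ≥ 3. -/
/-!
The `2 ^ n` signs `(-1) ^ |x|` annihilate every monomial `m` of degree less than `n`: the sum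
`∑ x, (-1) ^ |x| * x ^ m` over the Boolean cube factors over the coordinates as
`∏ i, (0 ^ m i - 1)`, and some exponent `m i` is zero. Hence they annihilate every polynomial `p` of
degree less than `n`. If the sign of `p` told the parity of `x`, every term `(-1) ^ |x| * p x` would
be nonpositive and the term at the origin negative, so the sum could not vanish. A tensor product
perceptron is a polynomial of degree at most `2`.
-/

open MvPolynomial

theorem exists_eq_zero_of_mem_support_of_totalDegree_lt {ι R : Type*} [Fintype ι] [CommSemiring R]
    {p : MvPolynomial ι R} (hp : p.totalDegree < Fintype.card ι) {m : ι →₀ ℕ}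
    (hm : m ∈ p.support) : ∃ i, m i = 0 := by
  by_contra! h
  have hdeg : ∑ i, m i ≤ p.totalDegree :=
    (Finsupp.sum_fintype m (fun _ e => e) fun _ => rfl).symm.trans_le (le_totalDegree hm)
  have hcard : Fintype.card ι ≤ ∑ i, m i := by
    simpa using Finset.sum_le_sum fun i (_ : i ∈ Finset.univ) => Nat.one_le_iff_ne_zero.mpr (h i)
  exact (hcard.trans hdeg).not_gt hp

section BooleanCube

variable {ι : Type*} (R : Type*) [CommRing R]

/-- The vertex of the cube `{0, 1} ^ ι` with coordinates in `R` encoded by `x : ι → Bool`, at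
which polynomials over `R` are evaluated. -/
def boolPoint (x : ι → Bool) : ι → R := fun i => if x i then 1 else 0

variable [Fintype ι]

/-- The parity character `(-1) ^ |x|` of the Boolean cube, where `|x|` is the number of coordinates
of `x` equal to `true`; it serves as the weights of the alternating sums over the cube. -/
def paritySign (x : ι → Bool) : R := (-1) ^ (Finset.univ.filter (fun i => x i = true)).card

theorem paritySign_eq_prod (x : ι → Bool) : paritySign R x = ∏ i, if x i then -1 else 1 := by
  rw [paritySign, ← Finset.prod_const, Finset.prod_filter]

theorem sum_paritySign_mul_prod_boolPoint_pow [DecidableEq ι] (m : ι → ℕ) :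
    ∑ x, paritySign R x * ∏ i, boolPoint R x i ^ m i = ∏ i, ((0 : R) ^ m i - 1) := by
  let factor (i : ι) (b : Bool) : R := (if b then -1 else 1) * (if b then 1 else 0) ^ m i
  calc ∑ x, paritySign R x * ∏ i, boolPoint R x i ^ m i
      = ∑ x : ι → Bool, ∏ i, factor i (x i) := by
        simp only [paritySign_eq_prod, ← Finset.prod_mul_distrib, boolPoint, factor]
    _ = ∏ i, ∑ b, factor i b := (Fintype.prod_sum factor).symm
    _ = ∏ i, ((0 : R) ^ m i - 1) :=
        Finset.prod_congr rfl fun i _ => by simp [factor, sub_eq_neg_add]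

variable {R}

theorem sum_paritySign_mul_eval_eq_zero [DecidableEq ι] {p : MvPolynomial ι R}
    (hp : p.totalDegree < Fintype.card ι) :
    ∑ x, paritySign R x * eval (boolPoint R x) p = 0 := by
  calc ∑ x, paritySign R x * eval (boolPoint R x) p
      = ∑ m ∈ p.support, p.coeff m * ∑ x, paritySign R x * ∏ i, boolPoint R x i ^ m i := by
        simp only [eval_eq', Finset.mul_sum]
        rw [Finset.sum_comm]
        simp only [mul_left_comm]
    _ = 0 := Finset.sum_eq_zero fun m hm => by
        obtain ⟨i, hi⟩ := exists_eq_zero_of_mem_support_of_totalDegree_lt hp hm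
        rw [sum_paritySign_mul_prod_boolPoint_pow,
          Finset.prod_eq_zero (Finset.mem_univ i) (by rw [hi, pow_zero, sub_self]), mul_zero]

/-- The polynomial `∑ i, ∑ j, w i j * x i * x j - z` computed by the tensor product perceptron with
weights `w` and bias `z`, encoded as a polynomial so that its degree can be compared with the number
of coordinates. -/
noncomputable def tensorPerceptron (w : ι → ι → R) (z : R) : MvPolynomial ι R :=
  (∑ i, ∑ j, C (w i j) * X i * X j) - C z

theorem eval_tensorPerceptron (w : ι → ι → R) (z : R) (v : ι → R) :
    eval v (tensorPerceptron w z) = (∑ i, ∑ j, w i j * v i * v j) - z := by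
  simp only [tensorPerceptron, map_sub, map_sum, map_mul, eval_C, eval_X]

theorem totalDegree_tensorPerceptron_le (w : ι → ι → R) (z : R) :
    (tensorPerceptron w z).totalDegree ≤ 2 := by
  have hterm (i j : ι) : (C (w i j) * X i * X j).totalDegree ≤ 2 :=
    ((isHomogeneous_C_mul_X (w i j) i).mul (isHomogeneous_X R j)).totalDegree_le
  exact (totalDegree_sub_C_le _ _).trans <|
    totalDegree_finsetSum_le fun i _ => totalDegree_finsetSum_le fun j _ => hterm i j

end BooleanCube

theorem stmt8_general {ι R : Type*} [Fintype ι] [CommRing R] [PartialOrder R]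
    [IsStrictOrderedRing R] {p : MvPolynomial ι R} (hp : p.totalDegree < Fintype.card ι) :
    ¬ ∀ x : ι → Bool,
      (Odd (Finset.univ.filter (fun i => x i = true)).card → 0 ≤ eval (boolPoint R x) p) ∧
      (¬ Odd (Finset.univ.filter (fun i => x i = true)).card → eval (boolPoint R x) p < 0) := by
  classical
  intro h
  have hnonpos (x : ι → Bool) : paritySign R x * eval (boolPoint R x) p ≤ 0 := by
    by_cases hx : Odd (Finset.univ.filter (fun i => x i = true)).card
    · simpa [paritySign, hx.neg_one_pow] using (h x).1 hx
    · simpa [paritySign, (Nat.not_odd_iff_even.mp hx).neg_one_pow] using ((h x).2 hx).le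
  have horigin : paritySign R (fun _ : ι => false) * eval (boolPoint R fun _ => false) p < 0 := by
    simpa [paritySign] using (h fun _ => false).2 (by simp)
  exact (Finset.sum_neg' (fun x _ => hnonpos x) ⟨_, Finset.mem_univ _, horigin⟩).ne
    (sum_paritySign_mul_eval_eq_zero hp)

/-- For `n ≥ 3`, no tensor product perceptron (even with a bias `z`) expresses
the parity function on the unnormalised Boolean hypercube `{0,1}^n` (including the origin):
there are no `w ∈ ℝ^{n×n}` and `z ∈ ℝ` such that for every `x ∈ {0,1}^n`,
`∑_{i,j} w_{ij} x_i x_j − z ≥ 0` when `parity(x) = 1` and `< 0` when `parity(x) = 0`. -/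
theorem stmt8 (n : ℕ) (hn : 3 ≤ n) :
    ¬ ∃ (w : Fin n → Fin n → ℝ) (z : ℝ),
      ∀ x : Fin n → Bool,
        let xr : Fin n → ℝ := fun i => if x i then 1 else 0
        (Odd (Finset.univ.filter (fun i => x i = true)).card →
          0 ≤ (∑ i, ∑ j, w i j * xr i * xr j) - z) ∧
        (¬ Odd (Finset.univ.filter (fun i => x i = true)).card →
          (∑ i, ∑ j, w i j * xr i * xr j) - z < 0) := by
  rintro ⟨w, z, h⟩
  have hdeg : (tensorPerceptron w z).totalDegree < Fintype.card (Fin n) :=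
    (totalDegree_tensorPerceptron_le w z).trans_lt ((Fintype.card_fin n).symm ▸ hn)
  exact stmt8_general hdeg fun x => by simpa only [eval_tensorPerceptron, boolPoint] using h x
end

section
/- Let N ≥ 1 and let w₁, …, w_N ∈ [−1, 1] be real numbers, with W = diag(w₁, …, w_N). Define the 2N×2N matrix U = (1/√2) [[√(I+W), −√(I−W)], [√(I−W), √(I+W)]], where the square roots are taken entrywise on the diagonal. Then: (i) U is unitary; and (ii) for every x ∈ ℝ^N with x_i ≥ 0 for all i and ∑_i x_i = 1, setting v = (√x₁, …, √x_N, 0, …, 0) ∈ ℂ^{2N} and Z = diag(I_N, −I_N), one has v† U† Z U v = ∑_i w_i x_i. Hence a QNN can express any function a perceptron with weights in [−1,1] can express on unit-norm data in the positive orthant. -/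
open Matrix

/-!
Write `w i = cos θᵢ`. By the half-angle formulas `√(1 + w i) / √2 = cos (θᵢ / 2)` and
`√(1 - w i) / √2 = sin (θᵢ / 2)`, so `U` is a direct sum of plane rotations by `θᵢ / 2`, hence
unitary. It sends `(v, 0)` to `(cos (θᵢ / 2) vᵢ, sin (θᵢ / 2) vᵢ)`, and `Z` weighs the two halves
with opposite signs, so `|vᵢ|²` is counted `cos² (θᵢ / 2) - sin² (θᵢ / 2) = cos θᵢ = w i` times.
-/

section Output

variable {n α : Type*} [Fintype n] [DecidableEq n] [Ring α] [StarRing α]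

/-- The output `v† U† Z U v` of the quantum neural network with unitary `U` on the input `v`, for
the readout operator `Z = diag(I, -I)`. The two copies of `n` are the two values of the readout
qubit. -/
def qnnOutput (U : Matrix (n ⊕ n) (n ⊕ n) α) (v : n ⊕ n → α) : α :=
  star v ⬝ᵥ ((Uᴴ * fromBlocks 1 0 0 (-1) * U) *ᵥ v)

theorem qnnOutput_eq_sub {U : Matrix (n ⊕ n) (n ⊕ n) α} {v : n ⊕ n → α} {a b : n → α}
    (h : U *ᵥ v = Sum.elim a b) : qnnOutput U v = star a ⬝ᵥ a - star b ⬝ᵥ b := by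
  calc
    qnnOutput U v = star (U *ᵥ v) ⬝ᵥ (fromBlocks 1 0 0 (-1) *ᵥ (U *ᵥ v)) := by
      rw [qnnOutput, star_mulVec, ← dotProduct_mulVec, mulVec_mulVec, mulVec_mulVec, mul_assoc]
    _ = star a ⬝ᵥ a - star b ⬝ᵥ b := by
      simp [h, fromBlocks_mulVec, dotProduct, neg_mulVec, sub_eq_add_neg]

end Output

section Rotation

variable {n : Type*} [DecidableEq n] (𝕜 : Type*) [RCLike 𝕜]

/-- The direct sum of the rotations by `θ i` in the planes spanned by the basis vectors `inl i` and
`inr i`, i.e. the block form of a multiplexed `R_y` gate. -/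
noncomputable def planeRotations (θ : n → ℝ) : Matrix (n ⊕ n) (n ⊕ n) 𝕜 :=
  fromBlocks (diagonal fun i => (Real.cos (θ i) : 𝕜)) (-diagonal fun i => (Real.sin (θ i) : 𝕜))
    (diagonal fun i => (Real.sin (θ i) : 𝕜)) (diagonal fun i => (Real.cos (θ i) : 𝕜))

theorem planeRotations_zero : planeRotations 𝕜 (0 : n → ℝ) = 1 := by
  simp [planeRotations]

theorem conjTranspose_planeRotations (θ : n → ℝ) :
    (planeRotations 𝕜 θ)ᴴ = planeRotations 𝕜 (-θ) := by
  simp [planeRotations, fromBlocks_conjTranspose, Pi.star_def]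

variable [Fintype n]

theorem planeRotations_add (θ φ : n → ℝ) :
    planeRotations 𝕜 (θ + φ) = planeRotations 𝕜 θ * planeRotations 𝕜 φ := by
  simp only [planeRotations, fromBlocks_multiply, diagonal_neg, diagonal_mul_diagonal,
    diagonal_add, Pi.add_apply, Real.cos_add, Real.sin_add]
  congr 2 <;> ext i <;> push_cast <;> ring

theorem planeRotations_mem_unitaryGroup (θ : n → ℝ) :
    planeRotations 𝕜 θ ∈ unitaryGroup (n ⊕ n) 𝕜 := by
  rw [mem_unitaryGroup_iff, star_eq_conjTranspose, conjTranspose_planeRotations,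
    ← planeRotations_add, add_neg_cancel, planeRotations_zero]

variable {𝕜}

theorem planeRotations_mulVec_elim_zero (θ : n → ℝ) (v : n → 𝕜) :
    planeRotations 𝕜 θ *ᵥ Sum.elim v 0 =
      Sum.elim (fun i => (Real.cos (θ i) : 𝕜) * v i) fun i => (Real.sin (θ i) : 𝕜) * v i := by
  simp [planeRotations, fromBlocks_mulVec, mulVec_diagonal, funext_iff]

theorem qnnOutput_planeRotations (θ : n → ℝ) (v : n → 𝕜) :
    qnnOutput (planeRotations 𝕜 θ) (Sum.elim v 0) =
      ((∑ i, Real.cos (2 * θ i) * ‖v i‖ ^ 2 : ℝ) : 𝕜) := by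
  rw [qnnOutput_eq_sub (planeRotations_mulVec_elim_zero θ v), dotProduct, dotProduct,
    ← Finset.sum_sub_distrib, RCLike.ofReal_sum]
  refine Finset.sum_congr rfl fun i _ => ?_
  have normSq : star (v i) * v i = ((‖v i‖ ^ 2 : ℝ) : 𝕜) := by
    rw [RCLike.star_def, RCLike.conj_mul, RCLike.ofReal_pow]
  rw [Real.cos_two_mul', RCLike.ofReal_mul, ← normSq]
  simp only [Pi.star_apply, star_mul', RCLike.star_def, RCLike.conj_ofReal]
  push_cast
  ring

end Rotation

section Perceptron

theorem cos_half_arccos {t : ℝ} (ht : t ∈ Set.Icc (-1) 1) :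
    Real.cos (Real.arccos t / 2) = (√2)⁻¹ * √(1 + t) := by
  rw [Real.cos_half (by linarith [Real.arccos_nonneg t, Real.pi_pos]) (Real.arccos_le_pi t),
    Real.cos_arccos ht.1 ht.2, Real.sqrt_div' _ zero_le_two, div_eq_inv_mul]

theorem sin_half_arccos {t : ℝ} (ht : t ∈ Set.Icc (-1) 1) :
    Real.sin (Real.arccos t / 2) = (√2)⁻¹ * √(1 - t) := by
  rw [Real.sin_half_eq_sqrt (Real.arccos_nonneg t)
      (by linarith [Real.arccos_le_pi t, Real.pi_pos]),
    Real.cos_arccos ht.1 ht.2, Real.sqrt_div' _ zero_le_two, div_eq_inv_mul]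

variable {n : Type*} [DecidableEq n] (𝕜 : Type*) [RCLike 𝕜]

/-- The matrix `(1/√2) [[√(I+W), -√(I-W)], [√(I-W), √(I+W)]]`, `W = diag(w)`, of the quantum neural
network simulating the perceptron with weights `w`. `Real.sqrt` is `0` on negative numbers, so this
is the intended matrix only for weights in `[-1, 1]`. -/
noncomputable def perceptronMatrix (w : n → ℝ) : Matrix (n ⊕ n) (n ⊕ n) 𝕜 :=
  (√2 : 𝕜)⁻¹ •
    fromBlocks (diagonal fun i => (√(1 + w i) : 𝕜))
      (-diagonal fun i => (√(1 - w i) : 𝕜))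
      (diagonal fun i => (√(1 - w i) : 𝕜)) (diagonal fun i => (√(1 + w i) : 𝕜))

theorem perceptronMatrix_eq_planeRotations {w : n → ℝ} (hw : ∀ i, w i ∈ Set.Icc (-1) 1) :
    perceptronMatrix 𝕜 w = planeRotations 𝕜 fun i => Real.arccos (w i) / 2 := by
  simp only [perceptronMatrix, planeRotations, cos_half_arccos (hw _), sin_half_arccos (hw _),
    fromBlocks_smul, smul_neg, ← diagonal_smul, Pi.smul_def, smul_eq_mul, RCLike.ofReal_mul,
    RCLike.ofReal_inv]

theorem stmt12_general [Fintype n] {w : n → ℝ} (hw : ∀ i, w i ∈ Set.Icc (-1) 1) :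
    perceptronMatrix 𝕜 w ∈ unitaryGroup (n ⊕ n) 𝕜 ∧
      ∀ v : n → 𝕜, qnnOutput (perceptronMatrix 𝕜 w) (Sum.elim v 0) =
        ((∑ i, w i * ‖v i‖ ^ 2 : ℝ) : 𝕜) := by
  rw [perceptronMatrix_eq_planeRotations 𝕜 hw]
  refine ⟨planeRotations_mem_unitaryGroup 𝕜 _, fun v => ?_⟩
  have cos_angle (i : n) : Real.cos (2 * (Real.arccos (w i) / 2)) = w i := by
    rw [mul_div_cancel₀ _ two_ne_zero, Real.cos_arccos (hw i).1 (hw i).2]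
  simp only [qnnOutput_planeRotations, cos_angle]

end Perceptron

/-- For weights `w₁, …, w_N ∈ [-1,1]` with `W = diag(w)`, the matrix
`U = (1/√2) [[√(I+W), -√(I−W)], [√(I−W), √(I+W)]]` (entrywise square roots on the diagonal)
is unitary, and for every probability vector `x` (nonnegative entries summing to 1),
with `v = (√x₁, …, √x_N, 0, …, 0)` and `Z = diag(I, -I)`, one has
`v† U† Z U v = ∑ᵢ wᵢ xᵢ`. -/
theorem stmt12 (N : ℕ) (hN : 1 ≤ N) (w : Fin N → ℝ)
    (hw : ∀ i, w i ∈ Set.Icc (-1 : ℝ) 1) :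
    let A : Matrix (Fin N) (Fin N) ℂ :=
      Matrix.diagonal fun i => (Real.sqrt (1 + w i) : ℂ)
    let B : Matrix (Fin N) (Fin N) ℂ :=
      Matrix.diagonal fun i => (Real.sqrt (1 - w i) : ℂ)
    let U : Matrix (Fin N ⊕ Fin N) (Fin N ⊕ Fin N) ℂ :=
      ((Real.sqrt 2)⁻¹ : ℂ) • Matrix.fromBlocks A (-B) B A
    U ∈ Matrix.unitaryGroup (Fin N ⊕ Fin N) ℂ ∧
    ∀ x : Fin N → ℝ, (∀ i, 0 ≤ x i) → (∑ i, x i) = 1 →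
      star (Sum.elim (fun i => (Real.sqrt (x i) : ℂ)) 0) ⬝ᵥ
        ((Uᴴ * Matrix.fromBlocks 1 0 0 (-1) * U) *ᵥ
          Sum.elim (fun i => (Real.sqrt (x i) : ℂ)) 0)
      = ((∑ i, w i * x i : ℝ) : ℂ) := by
  refine ⟨(stmt12_general ℂ hw).1, fun x hx _ => ((stmt12_general ℂ hw).2 _).trans ?_⟩
  simp [Real.sq_sqrt (hx _)]
end

section
/- Let N ≥ 1, d ≥ 1, and let W¹, …, W^d be real diagonal N×N matrices with all entries in [−1, 1]. Then there exists a unitary matrix U ∈ M_{2^d · N}(ℂ) such that for every x ∈ ℝ^N with x_j ≥ 0 for all j and ∑_j x_j = 1, setting v ∈ ℂ^{2^d · N} to have entries √x_j in its first N coordinates and 0 elsewhere, and setting Z_i = I₂^{⊗(i−1)} ⊗ σ_Z ⊗ I₂^{⊗(d−i)} ⊗ I_N for each i = 1, …, d, one has v† U† Z_i U v = ∑_j (Wⁱ)_{jj} x_j simultaneously for every i. That is, a QNN with d readout qubits can simultaneously and independently encode d perceptrons. -/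
open Matrix

/-!
For a data index `j`, rotate the `i`-th qubit about the `y`-axis by the angle `arccos (Wⁱ)ⱼⱼ`.
Since `⟨0| R_y(θ)† σ_Z R_y(θ) |0⟩ = cos θ`, measuring `Z_i` on the rotated register gives `(Wⁱ)ⱼⱼ`;
the other qubits contribute only factors `⟨0| R† R |0⟩ = 1`, so the `d` rotations do not interfere.
Controlling the rotations on `j` makes the whole unitary block diagonal, hence the block values are
averaged with the weights `|ψⱼ|²`, which are `xⱼ` when `ψⱼ = √xⱼ`.
-/

section PiKronecker

variable {ι R : Type*} [Fintype ι] {l m n : ι → Type*}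

/-- The Kronecker product `⨂ᵢ Aᵢ` of a finite family of matrices. The tensor factors are not
flattened: rows and columns are indexed by tuples, so a register of qubits has basis `ι → Bool`. -/
def piKronecker [CommMonoid R] (A : ∀ i, Matrix (m i) (n i) R) :
    Matrix (∀ i, m i) (∀ i, n i) R :=
  of fun p q => ∏ i, A i (p i) (q i)

lemma piKronecker_apply [CommMonoid R] (A : ∀ i, Matrix (m i) (n i) R)
    (p : ∀ i, m i) (q : ∀ i, n i) : piKronecker A p q = ∏ i, A i (p i) (q i) :=
  rfl

lemma piKronecker_mul [CommSemiring R] [DecidableEq ι] [∀ i, Fintype (m i)]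
    (A : ∀ i, Matrix (l i) (m i) R) (B : ∀ i, Matrix (m i) (n i) R) :
    piKronecker (fun i => A i * B i) = piKronecker A * piKronecker B := by
  ext p q
  simp only [piKronecker_apply, mul_apply, Fintype.prod_sum, Finset.prod_mul_distrib]

lemma piKronecker_conjTranspose [CommSemiring R] [StarRing R]
    (A : ∀ i, Matrix (m i) (n i) R) :
    (piKronecker A)ᴴ = piKronecker fun i => (A i)ᴴ := by
  ext p q
  simp only [piKronecker_apply, conjTranspose_apply, star_prod]

lemma piKronecker_one [CommSemiring R] [∀ i, DecidableEq (n i)] :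
    piKronecker (fun i => (1 : Matrix (n i) (n i) R)) = 1 := by
  ext p q
  simp only [piKronecker_apply, one_apply, Fintype.prod_ite_zero, Finset.prod_const_one,
    funext_iff]

lemma piKronecker_mem_unitary [CommSemiring R] [StarRing R] [DecidableEq ι]
    [∀ i, Fintype (n i)] [∀ i, DecidableEq (n i)] {U : ∀ i, Matrix (n i) (n i) R}
    (hU : ∀ i, U i ∈ unitary (Matrix (n i) (n i) R)) :
    piKronecker U ∈ unitary (Matrix (∀ i, n i) (∀ i, n i) R) := by
  simp only [Unitary.mem_iff, star_eq_conjTranspose] at hU ⊢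
  simp only [piKronecker_conjTranspose, ← piKronecker_mul, hU, piKronecker_one, and_self]

lemma piKronecker_mulSingle_apply_self [CommSemiring R] [DecidableEq ι]
    [∀ i, DecidableEq (n i)] (i : ι) (A : Matrix (n i) (n i) R) (p : ∀ i, n i) :
    piKronecker (Pi.mulSingle i A) p p = A (p i) (p i) := by
  rw [piKronecker_apply, Fintype.prod_eq_single i fun k hk => by simp [hk], Pi.mulSingle_eq_same]

lemma piKronecker_mulSingle_diagonal [CommSemiring R] [DecidableEq ι]
    [∀ i, DecidableEq (n i)] (i : ι) (a : n i → R) :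
    piKronecker (Pi.mulSingle i (diagonal a)) = diagonal fun p => a (p i) := by
  ext p q
  rcases eq_or_ne p q with rfl | hpq
  · simp only [piKronecker_mulSingle_apply_self, diagonal_apply_eq]
  · obtain ⟨k, hk⟩ := Function.ne_iff.mp hpq
    rw [diagonal_apply_ne _ hpq, piKronecker_apply]
    refine Finset.prod_eq_zero (Finset.mem_univ k) ?_
    rcases eq_or_ne k i with rfl | hki
    · rw [Pi.mulSingle_eq_same, diagonal_apply_ne _ hk]
    · rw [Pi.mulSingle_eq_of_ne hki, one_apply_ne hk]

lemma conjTranspose_piKronecker_mul_mulSingle_mul [CommSemiring R] [StarRing R] [DecidableEq ι]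
    [∀ i, Fintype (n i)] [∀ i, DecidableEq (n i)] {U : ∀ i, Matrix (n i) (n i) R}
    (hU : ∀ i, U i ∈ unitary (Matrix (n i) (n i) R)) (i : ι) (A : Matrix (n i) (n i) R) :
    (piKronecker U)ᴴ * piKronecker (Pi.mulSingle i A) * piKronecker U =
      piKronecker (Pi.mulSingle i ((U i)ᴴ * A * U i)) := by
  rw [piKronecker_conjTranspose, ← piKronecker_mul, ← piKronecker_mul]
  congr 1
  funext k
  rcases eq_or_ne k i with rfl | hki
  · simp only [Pi.mulSingle_eq_same]
  · simp only [Pi.mulSingle_eq_of_ne hki, mul_one]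
    exact Unitary.star_mul_self_of_mem (hU k)

end PiKronecker

section BlockDiagonal

variable {m n o R : Type*} [Fintype m] [Fintype n] [Fintype o] [DecidableEq m] [DecidableEq n]
  [DecidableEq o]

lemma blockDiagonal_mem_unitary [Semiring R] [StarRing R] {U : o → Matrix n n R}
    (hU : ∀ j, U j ∈ unitary (Matrix n n R)) :
    blockDiagonal U ∈ unitary (Matrix (n × o) (n × o) R) := by
  simp only [Unitary.mem_iff, star_eq_conjTranspose] at hU ⊢
  simp only [blockDiagonal_conjTranspose, ← blockDiagonal_mul, hU]
  exact ⟨blockDiagonal_one, blockDiagonal_one⟩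

lemma ite_dotProduct_blockDiagonal_mulVec_ite [Semiring R] (M : o → Matrix m n R)
    (s : m) (t : n) (φ ψ : o → R) :
    (fun p => if p.1 = s then φ p.2 else 0) ⬝ᵥ
      (blockDiagonal M *ᵥ fun p => if p.1 = t then ψ p.2 else 0) =
        ∑ j, φ j * (M j s t * ψ j) := by
  simp [dotProduct, mulVec, Fintype.sum_prod_type_right, blockDiagonal_apply]

end BlockDiagonal

section Rotation

/-- The single-qubit gate `R_y(θ)`, the rotation of the Bloch sphere by `θ` about the `y`-axis,
in the basis `|0⟩ = false`, `|1⟩ = true`. -/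
noncomputable def yRotation (θ : ℝ) : Matrix Bool Bool ℂ :=
  of fun
    | false, false => (Real.cos (θ / 2) : ℂ)
    | false, true => -(Real.sin (θ / 2) : ℂ)
    | true, false => (Real.sin (θ / 2) : ℂ)
    | true, true => (Real.cos (θ / 2) : ℂ)

lemma yRotation_mem_unitaryGroup (θ : ℝ) : yRotation θ ∈ unitaryGroup Bool ℂ := by
  have hsq : (Real.cos (θ / 2) : ℂ) ^ 2 + (Real.sin (θ / 2) : ℂ) ^ 2 = 1 :=
    mod_cast Real.cos_sq_add_sin_sq (θ / 2)
  rw [mem_unitaryGroup_iff']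
  ext a b
  cases a <;> cases b <;>
    simp only [mul_apply, star_apply, Fintype.sum_bool, yRotation, of_apply, one_apply,
      Complex.star_def, map_neg, Complex.conj_ofReal, reduceCtorEq, if_true, if_false] <;>
    grind

/-- The Pauli matrix `σ_Z`, with eigenvalue `1` on `|0⟩ = false` and `-1` on `|1⟩ = true`. -/
def pauliZ : Matrix Bool Bool ℂ :=
  diagonal fun b => if b then -1 else 1

lemma conjTranspose_yRotation_mul_pauliZ_mul_yRotation_apply_false (θ : ℝ) :
    ((yRotation θ)ᴴ * pauliZ * yRotation θ) false false = Real.cos θ := by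
  have hcos : Real.cos θ = Real.cos (θ / 2) ^ 2 - Real.sin (θ / 2) ^ 2 := by
    rw [← Real.cos_two_mul', mul_div_cancel₀ θ two_ne_zero]
  rw [hcos, pauliZ, mul_apply]
  simp only [mul_diagonal, conjTranspose_apply, Fintype.sum_bool, yRotation, of_apply,
    Complex.star_def, Complex.conj_ofReal, reduceCtorEq, if_true, if_false]
  push_cast
  ring

end Rotation

section Multiplexed

variable {ι κ : Type*} [Fintype ι] [DecidableEq κ]

/-- The gate applying `R_y(θ i j)` to every qubit `i` when the data register is in state `j`. -/
noncomputable def multiplexedRotation (θ : ι → κ → ℝ) :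
    Matrix ((ι → Bool) × κ) ((ι → Bool) × κ) ℂ :=
  blockDiagonal fun j => piKronecker fun i => yRotation (θ i j)

variable [DecidableEq ι] [Fintype κ]

lemma multiplexedRotation_mem_unitaryGroup (θ : ι → κ → ℝ) :
    multiplexedRotation θ ∈ unitaryGroup ((ι → Bool) × κ) ℂ :=
  blockDiagonal_mem_unitary fun j =>
    piKronecker_mem_unitary fun i => yRotation_mem_unitaryGroup (θ i j)

lemma conjTranspose_multiplexedRotation_mul_readout_mul (θ : ι → κ → ℝ) (i : ι) :
    (multiplexedRotation θ)ᴴ *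
        diagonal (fun p : (ι → Bool) × κ => if p.1 i then (-1 : ℂ) else 1) *
        multiplexedRotation θ =
      blockDiagonal fun j => piKronecker
        (Pi.mulSingle i ((yRotation (θ i j))ᴴ * pauliZ * yRotation (θ i j))) := by
  have hZ : diagonal (fun p : (ι → Bool) × κ => if p.1 i then (-1 : ℂ) else 1) =
      blockDiagonal fun _ => piKronecker (Pi.mulSingle i pauliZ) := by
    simp only [pauliZ, piKronecker_mulSingle_diagonal, blockDiagonal_diagonal]
  rw [hZ, multiplexedRotation, blockDiagonal_conjTranspose, ← blockDiagonal_mul,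
    ← blockDiagonal_mul]
  congr 1
  funext j
  exact conjTranspose_piKronecker_mul_mulSingle_mul
    (fun k => yRotation_mem_unitaryGroup (θ k j)) i pauliZ

lemma multiplexedRotation_readout_expectation (θ : ι → κ → ℝ) (ψ : κ → ℂ) (i : ι) :
    let v : (ι → Bool) × κ → ℂ := fun p => if p.1 = (fun _ => false) then ψ p.2 else 0
    star v ⬝ᵥ
        (((multiplexedRotation θ)ᴴ *
            diagonal (fun p : (ι → Bool) × κ => if p.1 i then (-1 : ℂ) else 1) *
          multiplexedRotation θ) *ᵥ v) =
      ((∑ j, Real.cos (θ i j) * ‖ψ j‖ ^ 2 : ℝ) : ℂ) := by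
  intro v
  have hv : star v = fun p => if p.1 = (fun _ => false) then star (ψ p.2) else 0 := by
    funext p
    simp only [v, Pi.star_apply, apply_ite star, star_zero]
  rw [hv, conjTranspose_multiplexedRotation_mul_readout_mul,
    ite_dotProduct_blockDiagonal_mulVec_ite _ _ _ (fun j => star (ψ j))]
  push_cast
  refine Finset.sum_congr rfl fun j _ => ?_
  rw [piKronecker_mulSingle_apply_self,
    conjTranspose_yRotation_mul_pauliZ_mul_yRotation_apply_false, ← Complex.conj_mul' (ψ j)]
  push_cast
  exact mul_left_comm _ _ _

end Multiplexed

theorem stmt14_general {ι κ : Type*} [Fintype ι] [DecidableEq ι] [Fintype κ] [DecidableEq κ]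
    (W : ι → κ → ℝ) (hW : ∀ i j, W i j ∈ Set.Icc (-1 : ℝ) 1) :
    ∃ U : Matrix ((ι → Bool) × κ) ((ι → Bool) × κ) ℂ,
      U ∈ unitaryGroup ((ι → Bool) × κ) ℂ ∧
      ∀ ψ : κ → ℂ,
        let v : (ι → Bool) × κ → ℂ := fun p => if p.1 = (fun _ => false) then ψ p.2 else 0
        ∀ i : ι,
          star v ⬝ᵥ
            ((Uᴴ * diagonal (fun p : (ι → Bool) × κ => if p.1 i then (-1 : ℂ) else 1) * U) *ᵥ v) =
          ((∑ j, W i j * ‖ψ j‖ ^ 2 : ℝ) : ℂ) := by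
  refine ⟨multiplexedRotation fun i j => Real.arccos (W i j),
    multiplexedRotation_mem_unitaryGroup _, fun ψ => ?_⟩
  intro _ i
  simpa only [Real.cos_arccos (hW _ _).1 (hW _ _).2] using
    multiplexedRotation_readout_expectation (fun i j => Real.arccos (W i j)) ψ i

/-- A QNN with `d` readout qubits can simultaneously and independently encode
`d` perceptrons.  The Hilbert space `ℂ^{2^d · N}` is indexed by `(Fin d → Bool) × Fin N`
(the bit string of the `d` qubits together with the `N`-dimensional data register);
`Z_i = I₂^{⊗(i−1)} ⊗ σ_Z ⊗ I₂^{⊗(d−i)} ⊗ I_N` is the diagonal matrix whose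
`((s,j),(s,j))` entry is `-1` if `s i = 1` and `1` otherwise, and the input
`v` has entries `√xⱼ` at the coordinates `(0…0, j)` and `0` elsewhere.  For diagonal weight
matrices `Wⁱ` with entries in `[-1,1]` there is a single unitary `U` such that
`v† U† Z_i U v = ∑ⱼ (Wⁱ)ⱼⱼ xⱼ` simultaneously for every `i`. -/
theorem stmt14 (N d : ℕ) (hN : 1 ≤ N) (hd : 1 ≤ d)
    (W : Fin d → Fin N → ℝ) (hW : ∀ i j, W i j ∈ Set.Icc (-1 : ℝ) 1) :
    ∃ U : Matrix ((Fin d → Bool) × Fin N) ((Fin d → Bool) × Fin N) ℂ,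
      U ∈ Matrix.unitaryGroup ((Fin d → Bool) × Fin N) ℂ ∧
      ∀ x : Fin N → ℝ, (∀ j, 0 ≤ x j) → (∑ j, x j) = 1 →
        let v : (Fin d → Bool) × Fin N → ℂ := fun p =>
          if p.1 = (fun _ => false) then (Real.sqrt (x p.2) : ℂ) else 0
        ∀ i : Fin d,
          star v ⬝ᵥ
            ((Uᴴ *
                Matrix.diagonal (fun p : (Fin d → Bool) × Fin N =>
                  if p.1 i then (-1 : ℂ) else 1) *
              U) *ᵥ v)
          = ((∑ j, W i j * x j : ℝ) : ℂ) := by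
  obtain ⟨U, hU, hexp⟩ := stmt14_general W hW
  exact ⟨U, hU, fun x hx _ => by simpa [Real.sq_sqrt, hx] using hexp fun j => (√(x j) : ℂ)⟩
end

section
/- Let n ≥ 1 and set N = 2^n. For every function f : {0,1}^n → {0,1} there exists a unitary matrix U ∈ M_{2N}(ℂ) such that for every x ∈ {0,1}^n, letting e_x ∈ ℂ^N denote the standard basis vector indexed by x (basis encoding) and v = (e_x, 0) ∈ ℂ^{2N}, and Z = diag(I_N, −I_N), one has v† U† Z U v > 0 if f(x) = 1 and v† U† Z U v < 0 if f(x) = 0. That is, a QNN with basis encoding can express every Boolean function on n bits. -/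
open Matrix
open scoped ComplexOrder

/-!
Let `U` be the permutation matrix of the oracle `|x, b⟩ ↦ |x, b ⊕ ¬f(x)⟩`. It sends `(e_x, 0)` to
`(e_x, 0)` if `f x = true` and to `(0, e_x)` otherwise, and these are eigenvectors of `Z` with
eigenvalues `1` and `-1`.
-/

theorem sumElim_ite_eq_single_inl {ι κ R : Type*} [DecidableEq ι] [DecidableEq κ] [Zero R] [One R]
    (x : ι) :
    (Sum.elim (fun y ↦ if y = x then 1 else 0) 0 : ι ⊕ κ → R) = Pi.single (.inl x) 1 := by
  ext (y | y) <;> simp [Pi.single_apply]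

section Matrix

variable {m R : Type*} [Fintype m] [DecidableEq m]

theorem star_single_one_dotProduct_mulVec_single_one [Semiring R] [StarRing R]
    (A : Matrix m m R) (i : m) :
    star (Pi.single i 1) ⬝ᵥ (A *ᵥ Pi.single i 1) = A i i := by
  rw [← Pi.single_star, star_one, single_one_dotProduct, mulVec_single_one, col_apply]

theorem permMatrix_mem_unitaryGroup [CommRing R] [StarRing R] (σ : Equiv.Perm m) :
    σ.permMatrix R ∈ unitaryGroup m R := by
  rw [mem_unitaryGroup_iff, star_eq_conjTranspose, conjTranspose_permMatrix, ← permMatrix_mul,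
    inv_mul_cancel, permMatrix_one]

theorem conjTranspose_permMatrix_mul_mul_permMatrix [Semiring R] [StarRing R]
    (σ : Equiv.Perm m) (A : Matrix m m R) :
    (σ.permMatrix R)ᴴ * A * σ.permMatrix R = A.submatrix σ.symm σ.symm := by
  rw [conjTranspose_permMatrix, PEquiv.toMatrix_toPEquiv_mul, PEquiv.mul_toMatrix_toPEquiv,
    submatrix_submatrix, Function.comp_id, Function.id_comp, Equiv.Perm.inv_def]

end Matrix

section Oracle

variable {ι : Type*}

/-- The reversible oracle `|x, b⟩ ↦ |x, b ⊕ f(x)⟩` of a Boolean function `f`, as a permutation of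
the computational basis. The readout bit `b` is encoded by the summand: `Sum.inl x` is `|x, 0⟩` and
`Sum.inr x` is `|x, 1⟩`. -/
def xorOracle (f : ι → Bool) : Equiv.Perm (ι ⊕ ι) :=
  Function.Involutive.toPerm
    (Sum.elim (fun x ↦ if f x then .inr x else .inl x) (fun x ↦ if f x then .inl x else .inr x))
    (by rintro (x | x) <;> cases h : f x <;> simp [h])

theorem xorOracle_symm (f : ι → Bool) : (xorOracle f).symm = xorOracle f :=
  Function.Involutive.toPerm_symm _

theorem xorOracle_inl (f : ι → Bool) (x : ι) :
    xorOracle f (.inl x) = if f x then .inr x else .inl x :=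
  rfl

theorem readout_xorOracle {R : Type*} [Fintype ι] [DecidableEq ι] [Ring R] [StarRing R]
    (f : ι → Bool) (x : ι) :
    let U := (xorOracle f).permMatrix R
    let v : ι ⊕ ι → R := Pi.single (.inl x) 1
    star v ⬝ᵥ ((Uᴴ * fromBlocks 1 0 0 (-1) * U) *ᵥ v) = if f x then -1 else 1 := by
  intro U v
  rw [star_single_one_dotProduct_mulVec_single_one, conjTranspose_permMatrix_mul_mul_permMatrix,
    submatrix_apply, xorOracle_symm, xorOracle_inl]
  cases f x <;> simp

end Oracle

theorem stmt15_general {ι R : Type*} [Fintype ι] [DecidableEq ι] [CommRing R] [StarRing R]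
    (f : ι → Bool) :
    ∃ U : Matrix (ι ⊕ ι) (ι ⊕ ι) R, U ∈ unitaryGroup (ι ⊕ ι) R ∧
      ∀ x : ι,
        let e : ι → R := fun y ↦ if y = x then 1 else 0
        let v : ι ⊕ ι → R := Sum.elim e 0
        star v ⬝ᵥ ((Uᴴ * fromBlocks 1 0 0 (-1) * U) *ᵥ v) = if f x then 1 else -1 := by
  refine ⟨(xorOracle fun x ↦ !f x).permMatrix R, permMatrix_mem_unitaryGroup _, fun x ↦ ?_⟩
  simp only [sumElim_ite_eq_single_inl, readout_xorOracle]
  cases f x <;> rfl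

/-- A QNN with basis encoding can express every Boolean function on `n` bits.
The `2^n`-dimensional Hilbert space is indexed by `Fin n → Bool`; `e_x` is the standard
basis vector indexed by `x`, `v = (e_x, 0)`, and `Z = diag(I, -I)`.  (The inequalities
use the partial order on `ℂ`, so `0 < out` says the output is real and positive.) -/
theorem stmt15 (n : ℕ) (hn : 1 ≤ n) (f : (Fin n → Bool) → Bool) :
    ∃ U : Matrix ((Fin n → Bool) ⊕ (Fin n → Bool)) ((Fin n → Bool) ⊕ (Fin n → Bool)) ℂ,
      U ∈ Matrix.unitaryGroup ((Fin n → Bool) ⊕ (Fin n → Bool)) ℂ ∧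
      ∀ x : Fin n → Bool,
        let e : (Fin n → Bool) → ℂ := fun y => if y = x then 1 else 0
        let v : ((Fin n → Bool) ⊕ (Fin n → Bool)) → ℂ := Sum.elim e 0
        let out : ℂ := star v ⬝ᵥ ((Uᴴ * Matrix.fromBlocks 1 0 0 (-1) * U) *ᵥ v)
        (f x = true → 0 < out) ∧ (f x = false → out < 0) := by
  obtain ⟨U, hU, h_out⟩ := stmt15_general (R := ℂ) f
  exact ⟨U, hU, fun x ↦ ⟨fun hx ↦ by simp [h_out, hx], fun hx ↦ by simp [h_out, hx]⟩⟩
end
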